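/- Let 2 ≤ k₁ ≤ k₂ ≤ k₃ ≤ ⋯ be a nondecreasing sequence of positive integers. Then for any finite coloring of ℕ there exist positive integers d₁, d₂, d₃, … and a color γ such that for every n ∈ ℕ there exists a positive integer aₙ such that the set {aₙ + j₁d₁ + ⋯ + jₙdₙ | 0 ≤ j₁ ≤ k₁ − 1, …, 0 ≤ jₙ ≤ kₙ − 1} is monochromatic with the color γ. -/

import Mathlib

/-! Call a set large when it is piecewise syndetic. For a large set `A` and a finite set `S`, van
der Waerden's theorem with uniform bounds gives finitely many `d > 0` such that the sets
`{x | ∀ s ∈ S, x + d • s ∈ A}` have a large union. Largeness is partition regular, so already one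
`d` gives a large set. Starting from a large color class and repeating this step fixes the
differences `d₁, d₂, …` one at a time, each set staying large and hence nonempty; no choice of `dᵢ`
ever has to be revised. -/

section

open Finset

variable {M κ : Type*}

/-- A set is *thick* if it contains a translate of every finite set. Translations act on the left
of the finite set, which only matters when `+` is not commutative. -/
def IsThick [Add M] (A : Set M) : Prop :=
  ∀ F : Finset M, ∃ x, ∀ f ∈ F, x + f ∈ A

/-- A set `A` is *piecewise syndetic* if finitely many of the preimages `{x | x + t ∈ A}` cover a
thick set. This is the notion of largeness which is kept along the construction of the `dᵢ`. -/
def IsPiecewiseSyndetic [Add M] (A : Set M) : Prop :=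
  ∃ T : Finset M, IsThick {x | ∃ t ∈ T, x + t ∈ A}

namespace IsThick

theorem mono [Add M] {A B : Set M} (hA : IsThick A) (hAB : A ⊆ B) : IsThick B := fun F ↦
  (hA F).imp fun _ hx f hf ↦ hAB (hx f hf)

theorem nonempty [Add M] [Nonempty M] {A : Set M} (hA : IsThick A) : A.Nonempty := by
  obtain ⟨m⟩ := ‹Nonempty M›
  obtain ⟨x, hx⟩ := hA {m}
  exact ⟨x + m, hx m (mem_singleton_self m)⟩

theorem setOf_forall_add_mem [AddSemigroup M] {A : Set M} (hA : IsThick A) (F : Finset M) :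
    IsThick {x | ∀ f ∈ F, x + f ∈ A} := by
  classical
  intro G
  obtain ⟨x, hx⟩ := hA (image₂ (· + ·) G F)
  refine ⟨x, fun g hg f hf ↦ ?_⟩
  rw [add_assoc]
  exact hx _ (mem_image₂_of_mem hg hf)

theorem isPiecewiseSyndetic_or_isThick_of_union [AddSemigroup M] {A B : Set M}
    (h : IsThick (A ∪ B)) : IsPiecewiseSyndetic A ∨ IsThick B := by
  refine or_iff_not_imp_right.mpr fun hB ↦ ?_
  obtain ⟨F, hF⟩ : ∃ F : Finset M, ∀ x, ∃ f ∈ F, x + f ∉ B := by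
    simpa only [IsThick, not_forall, not_exists, exists_prop] using hB
  refine ⟨F, (h.setOf_forall_add_mem F).mono fun x hx ↦ ?_⟩
  obtain ⟨f, hf, hfB⟩ := hF x
  exact ⟨f, hf, (hx f hf).resolve_right hfB⟩

end IsThick

theorem exists_finite_forall_mono_homothetic_copy [AddCommMonoid M] [Finite κ] (S : Finset M) :
    ∃ P : Set (ℕ × M), P.Finite ∧ (∀ p ∈ P, 0 < p.1) ∧
      ∀ C : M → κ, ∃ p ∈ P, ∃ c, ∀ s ∈ S, C (p.1 • s + p.2) = c := by
  -- Compactness of `M → κ` makes the copies found in the separate colorings uniformly bounded.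
  let _ : TopologicalSpace κ := ⊥
  have : DiscreteTopology κ := ⟨rfl⟩
  let U (p : ℕ × M) : Set (M → κ) := ⋃ c, ⋂ s ∈ S, (fun C ↦ C (p.1 • s + p.2)) ⁻¹' {c}
  have mem_U {p : ℕ × M} {C : M → κ} : C ∈ U p ↔ ∃ c, ∀ s ∈ S, C (p.1 • s + p.2) = c := by
    simp only [U, Set.mem_iUnion, Set.mem_iInter, Set.mem_preimage, Set.mem_singleton_iff]
  have isOpen_U (p : ℕ × M) : IsOpen (U p) :=
    isOpen_iUnion fun c ↦ isOpen_biInter_finset fun s _ ↦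
      (isOpen_discrete {c}).preimage (continuous_apply (p.1 • s + p.2))
  have U_cover : (Set.univ : Set (M → κ)) ⊆ ⋃ p ∈ {p : ℕ × M | 0 < p.1}, U p := fun C _ ↦ by
    obtain ⟨a, ha, b, h⟩ := Combinatorics.exists_mono_homothetic_copy S C
    exact Set.mem_biUnion (show (a, b) ∈ {p : ℕ × M | 0 < p.1} from ha) (mem_U.mpr h)
  obtain ⟨P, hPpos, hPfin, hP⟩ :=
    isCompact_univ.elim_finite_subcover_image (fun p _ ↦ isOpen_U p) U_cover
  refine ⟨P, hPfin, hPpos, fun C ↦ ?_⟩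
  obtain ⟨p, hp, hC⟩ := Set.mem_iUnion₂.mp (hP (Set.mem_univ C))
  exact ⟨p, hp, mem_U.mp hC⟩

namespace IsPiecewiseSyndetic

theorem mono [Add M] {A B : Set M} (hA : IsPiecewiseSyndetic A) (hAB : A ⊆ B) :
    IsPiecewiseSyndetic B := by
  obtain ⟨T, hT⟩ := hA
  exact ⟨T, hT.mono fun _ ⟨t, ht, hxt⟩ ↦ ⟨t, ht, hAB hxt⟩⟩

theorem nonempty [Add M] [Nonempty M] {A : Set M} (hA : IsPiecewiseSyndetic A) :
    A.Nonempty := by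
  obtain ⟨T, hT⟩ := hA
  obtain ⟨x, t, -, hxt⟩ := hT.nonempty
  exact ⟨x + t, hxt⟩

theorem of_setOf_exists_add_mem [AddSemigroup M] {A : Set M} {T : Finset M}
    (h : IsPiecewiseSyndetic {x | ∃ t ∈ T, x + t ∈ A}) : IsPiecewiseSyndetic A := by
  classical
  obtain ⟨F, hF⟩ := h
  refine ⟨image₂ (· + ·) F T, hF.mono ?_⟩
  rintro x ⟨f, hf, t, ht, hx⟩
  exact ⟨f + t, mem_image₂_of_mem hf ht, by rwa [← add_assoc]⟩

theorem or_of_union [AddSemigroup M] {A B : Set M} (h : IsPiecewiseSyndetic (A ∪ B)) :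
    IsPiecewiseSyndetic A ∨ IsPiecewiseSyndetic B := by
  obtain ⟨T, hT⟩ := h
  have hAB : IsThick ({x | ∃ t ∈ T, x + t ∈ A} ∪ {x | ∃ t ∈ T, x + t ∈ B}) :=
    hT.mono fun x ⟨t, ht, hxt⟩ ↦ hxt.imp (⟨t, ht, ·⟩) (⟨t, ht, ·⟩)
  exact hAB.isPiecewiseSyndetic_or_isThick_of_union.imp of_setOf_exists_add_mem fun hB ↦ ⟨T, hB⟩

theorem exists_of_biUnion [AddSemigroup M] [Nonempty M] {ι : Type*} {I : Set ι} (hI : I.Finite)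
    {A : ι → Set M} (h : IsPiecewiseSyndetic (⋃ i ∈ I, A i)) :
    ∃ i ∈ I, IsPiecewiseSyndetic (A i) := by
  induction I, hI using Set.Finite.induction_on with
  | empty => simpa only [Set.biUnion_empty, Set.not_nonempty_empty] using h.nonempty
  | insert _ _ ih =>
    rw [Set.biUnion_insert] at h
    obtain hi | hI := h.or_of_union
    · exact ⟨_, Set.mem_insert _ _, hi⟩
    · obtain ⟨i, hi, hiA⟩ := ih hI
      exact ⟨i, Set.mem_insert_of_mem _ hi, hiA⟩

theorem exists_pos_setOf_forall_add_nsmul_mem [AddCommMonoid M] {A : Set M}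
    (hA : IsPiecewiseSyndetic A) (S : Finset M) :
    ∃ d : ℕ, 0 < d ∧ IsPiecewiseSyndetic {x | ∀ s ∈ S, x + d • s ∈ A} := by
  classical
  obtain ⟨T, hT⟩ := hA
  obtain ⟨P, hPfin, hPpos, hP⟩ := exists_finite_forall_mono_homothetic_copy (κ := T) S
  suffices h : IsPiecewiseSyndetic (⋃ p ∈ P, {x | ∀ s ∈ S, x + p.1 • s ∈ A}) by
    obtain ⟨p, hp, hpA⟩ := h.exists_of_biUnion hPfin
    exact ⟨p.1, hPpos p hp, hpA⟩
  have : Nonempty T := by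
    obtain ⟨-, t, ht, -⟩ := hT.nonempty
    exact ⟨t, ht⟩
  let F : Finset M := image₂ (fun p s ↦ p.1 • s + p.2) hPfin.toFinset S
  refine ⟨image₂ (fun t p ↦ t + p.2) T hPfin.toFinset,
    (hT.setOf_forall_add_mem F).mono fun x hx ↦ ?_⟩
  have hxF : ∀ f ∈ F, ∃ t : T, x + f + t ∈ A := fun f hf ↦ by
    obtain ⟨t, ht, hxt⟩ := hx f hf
    exact ⟨⟨t, ht⟩, hxt⟩
  choose! C hC using hxF
  obtain ⟨p, hp, t, hpt⟩ := hP C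
  refine ⟨t + p.2, mem_image₂_of_mem t.2 (hPfin.mem_toFinset.mpr hp),
    Set.mem_biUnion hp fun s hs ↦ ?_⟩
  have hs' : x + (p.1 • s + p.2) + t ∈ A :=
    hpt s hs ▸ hC _ (mem_image₂_of_mem (hPfin.mem_toFinset.mpr hp) hs)
  rwa [show x + (t + p.2) + p.1 • s = x + (p.1 • s + p.2) + t by abel]

theorem exists_seq_pos_setOf_forall_add_sum_mem [AddCommMonoid M] {A : Set M}
    (hA : IsPiecewiseSyndetic A) (S : ℕ → Finset M) :
    ∃ d : ℕ → ℕ, (∀ i, 0 < d i) ∧ ∀ n, IsPiecewiseSyndetic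
      {a | ∀ x : ℕ → M, (∀ i < n, x i ∈ S i) → a + ∑ i ∈ range n, d i • x i ∈ A} := by
  choose d hd hstep using fun B : {B : Set M // IsPiecewiseSyndetic B} ↦
    B.2.exists_pos_setOf_forall_add_nsmul_mem
  let B (n : ℕ) : {B : Set M // IsPiecewiseSyndetic B} :=
    n.rec ⟨A, hA⟩ fun i B ↦ ⟨_, hstep B (S i)⟩
  refine ⟨fun i ↦ d (B i) (S i), fun i ↦ hd _ _, fun n ↦ (B n).2.mono ?_⟩
  induction n with
  | zero =>
    intro a ha x _
    rw [range_zero, sum_empty, add_zero]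
    exact ha
  | succ n ih =>
    intro a ha x hx
    rw [sum_range_succ, add_comm (∑ i ∈ range n, _), ← add_assoc]
    exact ih (ha (x n) (hx n n.lt_succ_self)) x fun i hi ↦ hx i (hi.trans n.lt_succ_self)

end IsPiecewiseSyndetic

theorem exists_isPiecewiseSyndetic_preimage_singleton [AddSemigroup M] [Nonempty M] [Finite κ]
    (χ : M → κ) : ∃ γ, IsPiecewiseSyndetic (χ ⁻¹' {γ}) := by
  obtain ⟨m⟩ := ‹Nonempty M›
  have hM : IsPiecewiseSyndetic (⋃ γ ∈ Set.univ, χ ⁻¹' {γ}) := by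
    refine ⟨{m}, fun F ↦ ⟨m, fun f _ ↦ ⟨m, mem_singleton_self m, ?_⟩⟩⟩
    exact Set.mem_biUnion (Set.mem_univ _) rfl
  obtain ⟨γ, -, hγ⟩ := hM.exists_of_biUnion Set.finite_univ
  exact ⟨γ, hγ⟩

theorem infinitary_van_der_waerden_general [AddCommMonoid M] [Finite κ] (S : ℕ → Finset M)
    (χ : M → κ) :
    ∃ (d : ℕ → ℕ) (γ : κ), (∀ i, 0 < d i) ∧ ∀ I : Finset ℕ, ∃ a : M, ∀ x : ℕ → M,
      (∀ i ∈ I, x i ∈ S i) → χ (a + ∑ i ∈ I, d i • x i) = γ := by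
  classical
  obtain ⟨γ, hγ⟩ := exists_isPiecewiseSyndetic_preimage_singleton χ
  -- Adjoining `0` to each `S i` allows the indices outside `I` to be padded with `0`.
  obtain ⟨d, hd, h⟩ := hγ.exists_seq_pos_setOf_forall_add_sum_mem fun i ↦ insert 0 (S i)
  refine ⟨d, γ, hd, fun I ↦ ?_⟩
  obtain ⟨n, hn⟩ := I.exists_nat_subset_range
  obtain ⟨a, ha⟩ := (h n).nonempty
  refine ⟨a, fun x hx ↦ ?_⟩
  have hpad : χ _ = γ := ha (fun i ↦ if i ∈ I then x i else 0) fun i _ ↦ by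
    split_ifs with hi
    · exact mem_insert_of_mem (hx i hi)
    · exact mem_insert_self 0 _
  simpa only [smul_ite, smul_zero, sum_ite_mem, inter_eq_right.mpr hn] using hpad

end

/-- **Infinitary van der Waerden theorem.**
Let `2 ≤ k₁ ≤ k₂ ≤ ⋯` be a nondecreasing sequence of positive integers. Then for any
finite coloring `χ` of the positive integers (with colors `{1,…,c}`) there exist positive
integers `d₁, d₂, …` and a color `γ` such that for every `n ≥ 1` there exists a positive
integer `aₙ` such that the set
`{aₙ + j₁d₁ + ⋯ + jₙdₙ | 0 ≤ jᵢ ≤ kᵢ − 1}` is monochromatic with the color `γ`. -/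
theorem infinitary_van_der_waerden
    (k : ℕ → ℕ) (hk2 : 2 ≤ k 1) (hkmono : ∀ i, 1 ≤ i → k i ≤ k (i + 1))
    (c : ℕ) (hc : 1 ≤ c)
    (χ : ℕ → ℕ) (hχ : ∀ m, 1 ≤ m → χ m ∈ Finset.Icc 1 c) :
    ∃ (d : ℕ → ℕ) (γ : ℕ), γ ∈ Finset.Icc 1 c ∧
      (∀ i, 1 ≤ i → 0 < d i) ∧
      (∀ n, 1 ≤ n → ∃ a : ℕ, 0 < a ∧
        ∀ x : ℕ → ℕ, (∀ i, 1 ≤ i → i ≤ n → x i ≤ k i - 1) →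
          χ (a + ∑ i ∈ Finset.Icc 1 n, x i * d i) = γ) := by
  obtain ⟨d, γ, hd, h⟩ := infinitary_van_der_waerden_general (fun i ↦ Finset.Iic (k i - 1))
    fun m : ℕ ↦ (⟨χ (1 + m), hχ _ (Nat.le_add_right 1 m)⟩ : Finset.Icc 1 c)
  refine ⟨d, γ, γ.2, fun i _ ↦ hd i, fun n _ ↦ ?_⟩
  obtain ⟨a, ha⟩ := h (Finset.Icc 1 n)
  refine ⟨1 + a, Nat.add_pos_left one_pos a, fun x hx ↦ ?_⟩
  have hmono := ha x fun i hi ↦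
    Finset.mem_Iic.mpr (hx i (Finset.mem_Icc.mp hi).1 (Finset.mem_Icc.mp hi).2)
  simpa only [smul_eq_mul, mul_comm, add_assoc] using congrArg Subtype.val hmono
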